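/- arXiv:1109.0854 — 4 statements merged into one kernel-verified Lean document; each statement's English description precedes it below -/
import Mathlib

section
/- Let A be a linear relation between X and Z and B a linear relation between Y and Z. The following are equivalent: (i) there exists a linear relation C between X and Y such that A ⊆ B∘C; (ii) ran A ⊆ ran B; (iii) A ⊆ B∘(B⁻¹)∘A. -/
/-!
Linear relations between vector spaces, following Popovici–Sebestyén,
"Factorizations of Linear Relations".

A linear relation between `X` and `Y` is a linear subspace of `X × Y`,
formalized as `Submodule 𝕂 (X × Y)`.
-/

universe u

namespace LinRel

variable {𝕂 : Type u} [Field 𝕂]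
variable {X Y Z : Type u} [AddCommGroup X] [Module 𝕂 X]
  [AddCommGroup Y] [Module 𝕂 Y] [AddCommGroup Z] [Module 𝕂 Z]

/-- The domain of a linear relation. -/
def dom (R : Submodule 𝕂 (X × Y)) : Submodule 𝕂 X :=
  R.map (LinearMap.fst 𝕂 X Y)

/-- The range of a linear relation. -/
def ran (R : Submodule 𝕂 (X × Y)) : Submodule 𝕂 Y :=
  R.map (LinearMap.snd 𝕂 X Y)

/-- The kernel of a linear relation: `{x | (x, 0) ∈ R}`. -/
def ker (R : Submodule 𝕂 (X × Y)) : Submodule 𝕂 X :=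
  R.comap ((LinearMap.id : X →ₗ[𝕂] X).prod (0 : X →ₗ[𝕂] Y))

/-- The multivalued part of a linear relation: `{y | (0, y) ∈ R}`. -/
def mul (R : Submodule 𝕂 (X × Y)) : Submodule 𝕂 Y :=
  R.comap ((0 : Y →ₗ[𝕂] X).prod (LinearMap.id : Y →ₗ[𝕂] Y))

/-- The inverse of a linear relation: `{(y, x) | (x, y) ∈ R}`. -/
def inv (R : Submodule 𝕂 (X × Y)) : Submodule 𝕂 (Y × X) :=
  R.map ((LinearMap.snd 𝕂 X Y).prod (LinearMap.fst 𝕂 X Y))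

/-- The product (composition) of two linear relations:
`S ∘ R = {(x, z) | ∃ y, (x, y) ∈ R ∧ (y, z) ∈ S}`. -/
def comp (S : Submodule 𝕂 (Y × Z)) (R : Submodule 𝕂 (X × Y)) : Submodule 𝕂 (X × Z) where
  carrier := {p | ∃ y, (p.1, y) ∈ R ∧ (y, p.2) ∈ S}
  add_mem' := by
    rintro ⟨a, c⟩ ⟨a', c'⟩ ⟨y, h1, h2⟩ ⟨y', h1', h2'⟩
    exact ⟨y + y', R.add_mem h1 h1', S.add_mem h2 h2'⟩
  zero_mem' := ⟨0, R.zero_mem, S.zero_mem⟩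
  smul_mem' := by
    rintro c ⟨a, b⟩ ⟨y, h1, h2⟩
    exact ⟨c • y, R.smul_mem c h1, S.smul_mem c h2⟩

/-- The image `R(X₀)` of a subspace `X₀` under a linear relation `R`. -/
def img (R : Submodule 𝕂 (X × Y)) (X₀ : Submodule 𝕂 X) : Submodule 𝕂 Y :=
  ran (R ⊓ X₀.prod ⊤)

/-- The preimage `R⁻¹(Y₀)` of a subspace `Y₀` under a linear relation `R`. -/
def preimg (R : Submodule 𝕂 (X × Y)) (Y₀ : Submodule 𝕂 Y) : Submodule 𝕂 X :=
  img (inv R) Y₀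

end LinRel


open LinRel

variable {𝕂 : Type u} [Field 𝕂]
variable {X Y Z : Type u} [AddCommGroup X] [Module 𝕂 X]
  [AddCommGroup Y] [Module 𝕂 Y] [AddCommGroup Z] [Module 𝕂 Z]

namespace LinRel

@[simp]
theorem mem_ran {R : Submodule 𝕂 (X × Y)} {y : Y} : y ∈ ran R ↔ ∃ x, (x, y) ∈ R := by
  simp [ran]

@[simp]
theorem mk_mem_inv {R : Submodule 𝕂 (X × Y)} {x : X} {y : Y} :
    (y, x) ∈ inv R ↔ (x, y) ∈ R := by
  simp [inv]

@[simp]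
theorem mk_mem_comp {S : Submodule 𝕂 (Y × Z)} {R : Submodule 𝕂 (X × Y)} {x : X} {z : Z} :
    (x, z) ∈ comp S R ↔ ∃ y, (x, y) ∈ R ∧ (y, z) ∈ S :=
  Iff.rfl

theorem comp_assoc {W : Type u} [AddCommGroup W] [Module 𝕂 W] (T : Submodule 𝕂 (Y × Z))
    (S : Submodule 𝕂 (X × Y)) (R : Submodule 𝕂 (W × X)) :
    comp (comp T S) R = comp T (comp S R) := by
  ext ⟨w, z⟩
  simp only [mk_mem_comp]
  tauto

theorem ran_mono {R S : Submodule 𝕂 (X × Y)} (h : R ≤ S) : ran R ≤ ran S :=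
  Submodule.map_mono h

theorem ran_comp_le (S : Submodule 𝕂 (Y × Z)) (R : Submodule 𝕂 (X × Y)) :
    ran (comp S R) ≤ ran S := by
  intro z hz
  obtain ⟨_, y, _, hS⟩ := mem_ran.1 hz
  exact mem_ran.2 ⟨y, hS⟩

theorem mk_self_mem_comp_inv {R : Submodule 𝕂 (X × Y)} {y : Y} :
    (y, y) ∈ comp R (inv R) ↔ y ∈ ran R := by
  simp only [mk_mem_comp, mk_mem_inv, and_self, mem_ran]

theorem le_comp_comp_inv {A : Submodule 𝕂 (X × Z)} {B : Submodule 𝕂 (Y × Z)}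
    (h : ran A ≤ ran B) : A ≤ comp B (comp (inv B) A) := by
  rw [← comp_assoc]
  rintro ⟨x, z⟩ hA
  have hz : z ∈ ran B := h (mem_ran.2 ⟨x, hA⟩)
  exact mk_mem_comp.2 ⟨z, hA, mk_self_mem_comp_inv.2 hz⟩

end LinRel

/-- Theorem 2.2: `A ⊆ BC` for some linear relation `C` iff `ran A ⊆ ran B`
iff `A ⊆ B B⁻¹ A`. -/
theorem statement_0 (A : Submodule 𝕂 (X × Z)) (B : Submodule 𝕂 (Y × Z)) :
    ((∃ C : Submodule 𝕂 (X × Y), A ≤ comp B C) ↔ ran A ≤ ran B) ∧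
    (ran A ≤ ran B ↔ A ≤ comp B (comp (inv B) A)) := by
  have ran_le {C : Submodule 𝕂 (X × Y)} (h : A ≤ comp B C) : ran A ≤ ran B :=
    (ran_mono h).trans (ran_comp_le B C)
  constructor
  · exact ⟨fun ⟨_, h⟩ => ran_le h, fun h => ⟨comp (inv B) A, le_comp_comp_inv h⟩⟩
  · exact ⟨le_comp_comp_inv, ran_le⟩
end

section
/- Let A be a linear relation between X and Z and B a linear relation between X and Y. Then A = A∘(B⁻¹)∘B if and only if ker B ⊆ dom A ⊆ dom B and A(ker B) ⊆ mul A. In particular, if B⁻¹ is (the graph of) an operator (i.e. ker B = {0} — mul(B⁻¹) = {0}) and dom A ⊆ dom B, then the linear relation C = A∘(B⁻¹) satisfies A = C∘B. -/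
/-!
Linear relations between vector spaces, following Popovici–Sebestyén,
"Factorizations of Linear Relations".

A linear relation between `X` and `Y` is a linear subspace of `X × Y`,
formalized as `Submodule 𝕂 (X × Y)`.
-/

universe u

open LinRel

variable {𝕂 : Type u} [Field 𝕂]
variable {X Y Z : Type u} [AddCommGroup X] [Module 𝕂 X]
  [AddCommGroup Y] [Module 𝕂 Y] [AddCommGroup Z] [Module 𝕂 Z]

/-!
The two inclusions in `A = A B⁻¹ B` are governed by separate conditions. A pair `(x, z)` lies in
`A B⁻¹ B` exactly when `x` has a common `B`-image with some `x'` such that `(x', z) ∈ A`. Choosing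
`x' = x` gives `A ≤ A B⁻¹ B` as soon as `dom A ≤ dom B`. In general `x - x'` ranges over `ker B`, so
`A B⁻¹ B ≤ A` says that translating the first coordinate by `ker B` preserves `A`, that is,
`ker B ≤ ker A`. Finally, an element of `dom A` lies in `ker A` iff its images lie in `mul A`.
-/

namespace LinRel

variable {R A : Submodule 𝕂 (X × Z)} {B : Submodule 𝕂 (X × Y)} {S : Submodule 𝕂 (Z × Y)}
  {N : Submodule 𝕂 X} {x x' : X} {y : Y} {z : Z}

@[simp]
theorem mem_dom : x ∈ dom R ↔ ∃ z, (x, z) ∈ R := by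
  simp [dom]

@[simp]
theorem mem_ker : x ∈ ker R ↔ (x, 0) ∈ R :=
  Iff.rfl

@[simp]
theorem mem_mul : z ∈ mul R ↔ (0, z) ∈ R :=
  Iff.rfl

@[simp]
theorem mem_inv : (z, x) ∈ inv R ↔ (x, z) ∈ R := by
  simp [inv]

@[simp]
theorem mem_comp : (x, y) ∈ comp S R ↔ ∃ z, (x, z) ∈ R ∧ (z, y) ∈ S :=
  Iff.rfl

@[simp]
theorem mem_img : z ∈ img R N ↔ ∃ x ∈ N, (x, z) ∈ R := by
  simp [img, ran, and_comm]

theorem sub_mem_ker_iff (h : (x', z) ∈ R) : x - x' ∈ ker R ↔ (x, z) ∈ R := by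
  simpa using R.sub_mem_iff_left (x := (x, z)) h

theorem mem_mul_iff_mem_ker (h : (x, z) ∈ R) : z ∈ mul R ↔ x ∈ ker R := by
  simpa using (R.sub_mem_iff_right (y := (0, z)) h).symm

theorem le_ker_iff : N ≤ ker R ↔ N ≤ dom R ∧ img R N ≤ mul R := by
  constructor
  · intro hN
    refine ⟨fun x hx => mem_dom.2 ⟨0, hN hx⟩, fun z hz => ?_⟩
    obtain ⟨x, hx, hxz⟩ := mem_img.1 hz
    exact (mem_mul_iff_mem_ker hxz).2 (hN hx)
  · rintro ⟨hdom, himg⟩ x hx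
    obtain ⟨z, hxz⟩ := mem_dom.1 (hdom hx)
    exact (mem_mul_iff_mem_ker hxz).1 (himg (mem_img.2 ⟨x, hx, hxz⟩))

theorem mem_comp_inv_comp :
    (x, z) ∈ comp (comp A (inv B)) B ↔ ∃ y, (x, y) ∈ B ∧ ∃ x', (x', y) ∈ B ∧ (x', z) ∈ A := by
  simp only [mem_comp, mem_inv]

theorem le_comp_inv_comp_iff : A ≤ comp (comp A (inv B)) B ↔ dom A ≤ dom B := by
  constructor
  · intro hA x hx
    obtain ⟨z, hxz⟩ := mem_dom.1 hx
    obtain ⟨y, hxy, -⟩ := mem_comp_inv_comp.1 (hA hxz)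
    exact mem_dom.2 ⟨y, hxy⟩
  · rintro hdom ⟨x, z⟩ hxz
    obtain ⟨y, hxy⟩ := mem_dom.1 (hdom (mem_dom.2 ⟨z, hxz⟩))
    exact mem_comp_inv_comp.2 ⟨y, hxy, x, hxy, hxz⟩

theorem comp_inv_comp_le_iff : comp (comp A (inv B)) B ≤ A ↔ ker B ≤ ker A := by
  constructor
  · intro hA x hx
    exact hA (mem_comp_inv_comp.2 ⟨0, hx, 0, B.zero_mem, A.zero_mem⟩)
  · rintro hker ⟨x, z⟩ hxz
    obtain ⟨y, hxy, x', hx'y, hx'z⟩ := mem_comp_inv_comp.1 hxz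
    have hsub : x - x' ∈ ker B := (sub_mem_ker_iff hx'y).2 hxy
    exact (sub_mem_ker_iff hx'z).1 (hker hsub)

theorem eq_comp_inv_comp_iff :
    A = comp (comp A (inv B)) B ↔ dom A ≤ dom B ∧ ker B ≤ ker A := by
  rw [le_antisymm_iff, le_comp_inv_comp_iff, comp_inv_comp_le_iff]

end LinRel

/-- Corollary 2.5: `A = A B⁻¹ B` iff `ker B ⊆ dom A ⊆ dom B` and
`A(ker B) ⊆ mul A`; in particular, if `B⁻¹` is an operator
(`ker B = {0}`) and `dom A ⊆ dom B` then `C = A B⁻¹` satisfies `A = CB`. -/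
theorem statement_5 (A : Submodule 𝕂 (X × Z)) (B : Submodule 𝕂 (X × Y)) :
    (A = comp (comp A (inv B)) B ↔
      (ker B ≤ dom A ∧ dom A ≤ dom B ∧ img A (ker B) ≤ mul A)) ∧
    (ker B = ⊥ → dom A ≤ dom B → A = comp (comp A (inv B)) B) := by
  constructor
  · rw [eq_comp_inv_comp_iff, le_ker_iff, and_left_comm]
  · intro hker hdom
    exact eq_comp_inv_comp_iff.2 ⟨hdom, hker.trans_le bot_le⟩
end

section
/- Let A and B be linear relations between X and Z. The following are equivalent: (i) A ⊆ B; (ii) ker A ⊆ ker B and ran(A ∩ B) = ran A; (iii) mul A ⊆ mul B and dom(A ∩ B) = dom A. -/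
/-!
Linear relations between vector spaces, following Popovici–Sebestyén,
"Factorizations of Linear Relations".

A linear relation between `X` and `Y` is a linear subspace of `X × Y`,
formalized as `Submodule 𝕂 (X × Y)`.
-/

universe u

open LinRel

variable {𝕂 : Type u} [Field 𝕂]
variable {X Y Z : Type u} [AddCommGroup X] [Module 𝕂 X]
  [AddCommGroup Y] [Module 𝕂 Y] [AddCommGroup Z] [Module 𝕂 Z]

section Exact

variable {R L M N : Type*} [Ring R] [AddCommGroup L] [Module R L] [AddCommGroup M] [Module R M]
  [AddCommGroup N] [Module R N] {f : L →ₗ[R] M} {g : M →ₗ[R] N}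

theorem inf_ker_le_iff_comap_le_comap_of_exact (hfg : Function.Exact f g) (A B : Submodule R M) :
    A ⊓ LinearMap.ker g ≤ B ↔ A.comap f ≤ B.comap f := by
  rw [← Submodule.map_le_iff_le_comap, Submodule.map_comap_eq, hfg.linearMap_ker_eq, inf_comm]

-- By the modular law, `A ⊓ B ≤ A` is an equality once both sides agree below and modulo `ker g`.
theorem le_iff_comap_le_comap_and_map_inf_eq_of_exact (hfg : Function.Exact f g)
    (A B : Submodule R M) :
    A ≤ B ↔ A.comap f ≤ B.comap f ∧ (A ⊓ B).map g = A.map g := by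
  constructor
  · intro hAB
    exact ⟨Submodule.comap_mono hAB, by rw [inf_eq_left.mpr hAB]⟩
  · rintro ⟨hcomap, hmap⟩
    have inf_ker_le : A ⊓ LinearMap.ker g ≤ A ⊓ B :=
      le_inf inf_le_left ((inf_ker_le_iff_comap_le_comap_of_exact hfg A B).mpr hcomap)
    have le_sup_ker : A ≤ A ⊓ B ⊔ LinearMap.ker g := (LinearMap.map_le_map_iff g).mp hmap.ge
    exact inf_eq_left.mp (eq_of_le_of_inf_le_of_le_sup inf_le_left inf_ker_le le_sup_ker)

end Exact

-- Over a field, the comaps along `inl` and `inr` are definitionally `ker` and `mul`, and the maps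
-- along `snd` and `fst` are `ran` and `dom`.
theorem statement_11_general {R M N : Type*} [Ring R] [AddCommGroup M] [Module R M]
    [AddCommGroup N] [Module R N] (A B : Submodule R (M × N)) :
    (A ≤ B ↔ (A.comap (LinearMap.inl R M N) ≤ B.comap (LinearMap.inl R M N) ∧
      (A ⊓ B).map (LinearMap.snd R M N) = A.map (LinearMap.snd R M N))) ∧
    ((A.comap (LinearMap.inl R M N) ≤ B.comap (LinearMap.inl R M N) ∧
      (A ⊓ B).map (LinearMap.snd R M N) = A.map (LinearMap.snd R M N)) ↔
      (A.comap (LinearMap.inr R M N) ≤ B.comap (LinearMap.inr R M N) ∧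
        (A ⊓ B).map (LinearMap.fst R M N) = A.map (LinearMap.fst R M N))) := by
  have le_iff_ker_ran := le_iff_comap_le_comap_and_map_inf_eq_of_exact .inl_snd A B
  have le_iff_mul_dom := le_iff_comap_le_comap_and_map_inf_eq_of_exact .inr_fst A B
  exact ⟨le_iff_ker_ran, le_iff_ker_ran.symm.trans le_iff_mul_dom⟩

/-- Corollary 4.5 (Arens-type characterization): `A ⊆ B` iff
`ker A ⊆ ker B` and `ran (A ∩ B) = ran A`, iff
`mul A ⊆ mul B` and `dom (A ∩ B) = dom A`. -/
theorem statement_11 (A B : Submodule 𝕂 (X × Z)) :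
    (A ≤ B ↔ (ker A ≤ ker B ∧ ran (A ⊓ B) = ran A)) ∧
    ((ker A ≤ ker B ∧ ran (A ⊓ B) = ran A) ↔
      (mul A ≤ mul B ∧ dom (A ⊓ B) = dom A)) :=
  statement_11_general A B
end

section
/- Let R be a linear relation between X and Y. Then the codimension of ker R in dom R equals the codimension of mul R in ran R; that is, the dimension of the quotient space (dom R)/(ker R) equals the dimension of the quotient space (ran R)/(mul R). -/
/-!
Linear relations between vector spaces, following Popovici–Sebestyén,
"Factorizations of Linear Relations".

A linear relation between `X` and `Y` is a linear subspace of `X × Y`,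
formalized as `Submodule 𝕂 (X × Y)`.
-/

universe u

open LinRel

variable {𝕂 : Type u} [Field 𝕂]
variable {X Y Z : Type u} [AddCommGroup X] [Module 𝕂 X]
  [AddCommGroup Y] [Module 𝕂 Y] [AddCommGroup Z] [Module 𝕂 Z]

/-!
Both quotients are the same quotient of `R` itself. The projections map `R` onto `dom R` and
`ran R`, and the preimages of `ker R` and `mul R` under them coincide: if `(x, y) ∈ R`, then
`(x, y) = (x, 0) + (0, y)` shows that `(x, 0) ∈ R` exactly when `(0, y) ∈ R`.
-/

universe v w

namespace LinRel

variable {A M N : Type*} [Ring A] [AddCommGroup M] [Module A M] [AddCommGroup N] [Module A N]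

/-- The first isomorphism theorem for the composite of a surjection `f : M → N` with the
projection `N → N ⧸ p`. It presents a quotient of `N` as a quotient of `M`. -/
noncomputable def quotComapEquivOfSurjective (f : M →ₗ[A] N) (hf : Function.Surjective f)
    (p : Submodule A N) : (M ⧸ p.comap f) ≃ₗ[A] N ⧸ p :=
  have ker_eq : p.comap f = (p.mkQ ∘ₗ f).ker := by
    rw [LinearMap.ker_comp, Submodule.ker_mkQ]
  Submodule.quotEquivOfEq _ _ ker_eq ≪≫ₗ
    (p.mkQ ∘ₗ f).quotKerEquivOfSurjective (p.mkQ_surjective.comp hf)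

theorem mk_zero_mem_iff_zero_mk_mem {L : Submodule A (M × N)} {x : M} {y : N}
    (h : (x, y) ∈ L) : (x, 0) ∈ L ↔ (0, y) ∈ L := by
  have decomp : (x, (0 : N)) + (0, y) = (x, y) := by simp
  rw [← decomp] at h
  exact ⟨fun hx ↦ (L.add_mem_iff_right hx).1 h, fun hy ↦ (L.add_mem_iff_left hy).1 h⟩

theorem comap_fst_ker_eq_comap_snd_mul (L : Submodule A (M × N)) :
    ((L.comap (.inl A M N)).submoduleOf (L.map (.fst A M N))).comap
        ((LinearMap.fst A M N).submoduleMap L) =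
      ((L.comap (.inr A M N)).submoduleOf (L.map (.snd A M N))).comap
        ((LinearMap.snd A M N).submoduleMap L) := by
  ext ⟨⟨x, y⟩, hxy⟩
  exact mk_zero_mem_iff_zero_mk_mem hxy

/-- The isomorphism `dom L ⧸ ker L ≃ ran L ⧸ mul L` induced by a relation `L` between modules,
carrying the class of `x` to the class of `y` whenever `(x, y) ∈ L`. The four submodules are
written as images and preimages of `L` because `LinRel.dom` and its companions are defined only
over fields. -/
noncomputable def domQuotKerEquivRanQuotMul (L : Submodule A (M × N)) :
    (L.map (.fst A M N) ⧸ (L.comap (.inl A M N)).submoduleOf (L.map (.fst A M N))) ≃ₗ[A]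
      L.map (.snd A M N) ⧸ (L.comap (.inr A M N)).submoduleOf (L.map (.snd A M N)) :=
  (quotComapEquivOfSurjective _ (LinearMap.submoduleMap_surjective _ L) _).symm ≪≫ₗ
    Submodule.quotEquivOfEq _ _ (comap_fst_ker_eq_comap_snd_mul L) ≪≫ₗ
    quotComapEquivOfSurjective _ (LinearMap.submoduleMap_surjective _ L) _

end LinRel

theorem statement_13_general {A : Type*} {M : Type v} {N : Type w} [Ring A]
    [AddCommGroup M] [Module A M] [AddCommGroup N] [Module A N] (L : Submodule A (M × N)) :
    Cardinal.lift.{w} (Module.rank A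
        (L.map (.fst A M N) ⧸ (L.comap (.inl A M N)).submoduleOf (L.map (.fst A M N)))) =
      Cardinal.lift.{v} (Module.rank A
        (L.map (.snd A M N) ⧸ (L.comap (.inr A M N)).submoduleOf (L.map (.snd A M N)))) :=
  (domQuotKerEquivRanQuotMul L).lift_rank_eq

/-- Corollary 5.3: the codimension of `ker R` in `dom R` equals the
codimension of `mul R` in `ran R`. -/
theorem statement_13 (R : Submodule 𝕂 (X × Y)) :
    Module.rank 𝕂 (↥(dom R) ⧸ (ker R).comap (dom R).subtype) =
    Module.rank 𝕂 (↥(ran R) ⧸ (mul R).comap (ran R).subtype) := by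
  exact Cardinal.lift_injective (statement_13_general R)
end
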